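/- For every number of agents n ≥ 2, every set of chores M = {1,…,m}, every additive cost functions c_1,…,c_n on M, and every responsibilities b_1,…,b_n with 0 < b_i < 1 and ∑_i b_i = 1, there exists a finitely supported probability distribution D over assignments of all chores such that: (i) ex-ante, for every agent i the expected cost satisfies E_{(S_1,…,S_n)∼D}[c_i(S_i)] ≤ b_i·c_i(M); and (ii) ex-post, every assignment (S_1,…,S_n) in the support of D satisfies c_i(S_i) ≤ 2·MMS(c_i, b̌_i) for every agent i. -/

import Mathlib

/-!
Let `k = ⌈1/b⌉` and `d = k - 1`, so that `1 ≤ d` and `d * b ≤ 1` for every agent. Each agent sorts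
the chores by decreasing cost and cuts this order into consecutive blocks of `d` chores. Giving a
fraction `b i` of every chore to agent `i` is then a fractional matching of chores to pairs
(agent, block): every chore is matched with total weight `1`, and every pair has weight at most
`d * b ≤ 1`. By the Birkhoff-von Neumann theorem (`exists_matching_distribution`) it is a convex
combination of integral matchings. In expectation agent `i` pays exactly `b i` times her total
cost, and ex post she gets at most one chore from each of her blocks.

Let `f r` be the cost of the chore of rank `r`, counted from `0`. A chore in block `t + 1` costs at
most `f ((t + 1) * d)`, which is at most the average of the `d` chores of ranks
`t * d + 1, …, (t + 1) * d`. Hence the whole bundle costs at most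
`f 0 + (c(M) - f 0) / d`. Since `f 0 ≤ MMS` and `c(M) ≤ k * MMS = (d + 1) * MMS`, this is at most
`2 * MMS` (`bundle_bound`).
-/

open Finset

noncomputable section

/-- Cost of a bundle under an additive cost function. -/
def bundleVal {m : ℕ} (c : Fin m → ℝ) (S : Finset (Fin m)) : ℝ := ∑ j ∈ S, c j

/-- A tuple of bundles partitions the items: pairwise disjoint and covering all items. -/
def IsPartition {n m : ℕ} (A : Fin n → Finset (Fin m)) : Prop :=
  (∀ i j : Fin n, i ≠ j → Disjoint (A i) (A j)) ∧ ∀ e : Fin m, ∃ i, e ∈ A i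

/-- Maximin share `MMS(c, 1/k)` for an additive cost function over chores:
the minimum over partitions into `k` bundles of the maximum bundle cost. -/
def MMSc {m : ℕ} (c : Fin m → ℝ) (k : ℕ) : ℝ :=
  ⨅ P : {P : Fin k → Finset (Fin m) // IsPartition P}, ⨆ j : Fin k, bundleVal c (P.1 j)

/-! ### Lower bounds on the maximin share -/

lemma exists_isPartition {m k : ℕ} (hk : 0 < k) :
    Nonempty {P : Fin k → Finset (Fin m) // IsPartition P} := by
  refine ⟨⟨fun i => if i = ⟨0, hk⟩ then Finset.univ else ∅, ?_, ?_⟩⟩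
  · intro i j hij
    by_cases hi : i = ⟨0, hk⟩
    · have hj : j ≠ ⟨0, hk⟩ := fun h => hij (hi.trans h.symm)
      simp [hj]
    · simp [hi]
  · intro e
    exact ⟨⟨0, hk⟩, by simp⟩

lemma le_MMSc_of_forall {m k : ℕ} (hk : 0 < k) (c : Fin m → ℝ) (x : ℝ)
    (h : ∀ P : Fin k → Finset (Fin m), IsPartition P → x ≤ ⨆ j, bundleVal c (P j)) :
    x ≤ MMSc c k := by
  have := exists_isPartition (m := m) hk
  exact le_ciInf fun P => h P.1 P.2

lemma cost_le_MMSc {m k : ℕ} (hk : 0 < k) (c : Fin m → ℝ) (hc : ∀ j, 0 ≤ c j) (e : Fin m) :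
    c e ≤ MMSc c k := by
  refine le_MMSc_of_forall hk c _ fun P hP => ?_
  obtain ⟨i, hi⟩ := hP.2 e
  refine le_trans ?_ (le_ciSup (f := fun j => bundleVal c (P j)) (Set.finite_range _).bddAbove i)
  exact Finset.single_le_sum (fun j _ => hc j) hi

lemma MMSc_nonneg {m k : ℕ} (hk : 0 < k) (c : Fin m → ℝ) (hc : ∀ j, 0 ≤ c j) :
    0 ≤ MMSc c k :=
  le_MMSc_of_forall hk c _ fun _ _ =>
    Real.iSup_nonneg fun _ => Finset.sum_nonneg fun j _ => hc j

lemma total_le_mul_MMSc {m k : ℕ} (hk : 0 < k) (c : Fin m → ℝ) :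
    ∑ j, c j ≤ k * MMSc c k := by
  have hk' : (0 : ℝ) < k := by exact_mod_cast hk
  rw [mul_comm, ← div_le_iff₀ hk']
  refine le_MMSc_of_forall hk c _ fun P hP => ?_
  rw [div_le_iff₀ hk']
  have hU : (Finset.univ : Finset (Fin m)) = Finset.univ.biUnion P := by
    ext e
    simpa using hP.2 e
  rw [hU, Finset.sum_biUnion (fun i _ j _ hij => hP.1 i j hij)]
  calc ∑ i, ∑ j ∈ P i, c j ≤ ∑ _i : Fin k, ⨆ j, bundleVal c (P j) :=
        Finset.sum_le_sum fun i _ =>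
          le_ciSup (f := fun j => bundleVal c (P j)) (Set.finite_range _).bddAbove i
    _ = (⨆ j, bundleVal c (P j)) * k := by simp [mul_comm]

/-! ### Rounding a fractional matching -/

/-- A fractional matching that saturates `J` is the expectation of a random injection `J → S`
whose graph lies in the support of the matching. The sample space is `Equiv.Perm (J ⊕ S)`. -/
lemma exists_matching_distribution {J S : Type} [Fintype J] [DecidableEq J] [Fintype S]
    [DecidableEq S] [Nonempty S] (Y : J → S → ℝ) (h0 : ∀ j s, 0 ≤ Y j s)
    (hrow : ∀ j, ∑ s, Y j s = 1) (hcol : ∀ s, ∑ j, Y j s ≤ 1) :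
    ∃ (w : Equiv.Perm (J ⊕ S) → ℝ) (g : Equiv.Perm (J ⊕ S) → J → S),
      (∀ σ, 0 ≤ w σ) ∧ ∑ σ, w σ = 1 ∧
      (∀ σ, w σ ≠ 0 → Function.Injective (g σ) ∧ ∀ j, Y j (g σ j) ≠ 0) ∧
      ∀ j s, ∑ σ, w σ * (if g σ j = s then 1 else 0) = Y j s := by
  -- Completing `Y` by its transpose and the column deficits gives a doubly stochastic matrix.
  let M : Matrix (J ⊕ S) (J ⊕ S) ℝ :=
    Matrix.fromBlocks 0 (Matrix.of Y) (Matrix.of Y).transpose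
      (Matrix.diagonal fun s => 1 - ∑ j, Y j s)
  have hM : M ∈ doublyStochastic ℝ (J ⊕ S) := by
    rw [mem_doublyStochastic_iff_sum]
    refine ⟨?_, ?_, ?_⟩
    · rintro (i | i) (j | j)
      · simp [M]
      · simp [M, h0]
      · simp [M, h0]
      · by_cases h : i = j
        · subst h
          simpa [M] using hcol i
        · simp [M, h]
    · rintro (i | i)
      · simp [M, hrow]
      · simp [M, Matrix.diagonal_apply]
    · rintro (i | i)
      · simp [M, hrow]
      · simp [M, Matrix.diagonal_apply]
  obtain ⟨w, hw0, hw1, hwM⟩ := exists_eq_sum_perm_of_mem_doublyStochastic hM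
  have entry : ∀ x y, ∑ σ, w σ * (if σ x = y then 1 else 0) = M x y := by
    intro x y
    rw [← hwM]
    simp [Matrix.sum_apply, Equiv.Perm.permMatrix, PEquiv.toMatrix_apply, eq_comm]
  have supp : ∀ σ, w σ ≠ 0 → ∀ x, M x (σ x) ≠ 0 := by
    intro σ hσ x hx
    have h1 := entry x (σ x)
    rw [hx, Finset.sum_eq_zero_iff_of_nonneg] at h1
    · exact hσ (by simpa using h1 σ (Finset.mem_univ _))
    · intro τ _
      exact mul_nonneg (hw0 τ) (by split_ifs <;> norm_num)
  let g : Equiv.Perm (J ⊕ S) → J → S := fun σ j =>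
    Sum.elim (fun _ => Classical.arbitrary S) id (σ (Sum.inl j))
  have hg : ∀ σ, w σ ≠ 0 → ∀ j, σ (Sum.inl j) = Sum.inr (g σ j) := by
    intro σ hσ j
    have h1 := supp σ hσ (Sum.inl j)
    rcases h : σ (Sum.inl j) with a | a
    · rw [h] at h1
      simp [M] at h1
    · simp [g, h]
  refine ⟨w, g, hw0, hw1, ?_, ?_⟩
  · intro σ hσ
    refine ⟨?_, ?_⟩
    · intro a a' haa
      have h1 : σ (Sum.inl a) = σ (Sum.inl a') := by rw [hg σ hσ, hg σ hσ, haa]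
      exact Sum.inl_injective (σ.injective h1)
    · intro j
      have h1 := supp σ hσ (Sum.inl j)
      rw [hg σ hσ] at h1
      simpa [M] using h1
  · intro j s
    have h1 := entry (Sum.inl j) (Sum.inr s)
    have h2 : M (Sum.inl j) (Sum.inr s) = Y j s := by simp [M]
    rw [← h2, ← h1]
    refine Finset.sum_congr rfl fun σ _ => ?_
    by_cases hσ : w σ = 0
    · simp [hσ]
    · simp [hg σ hσ j]

/-! ### Costs in sorted order -/

lemma block_sum_le (f : ℕ → ℝ) (hf : Antitone f) (d T : ℕ) :
    d * ∑ t ∈ Finset.range T, f ((t + 1) * d) ≤ ∑ r ∈ Finset.range (T * d), f (r + 1) := by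
  induction T with
  | zero => simp
  | succ T ih =>
    rw [Finset.sum_range_succ, mul_add, add_mul, one_mul, Finset.sum_range_add]
    refine add_le_add ih ?_
    calc (d : ℝ) * f (T * d + d) = ∑ _x ∈ Finset.range d, f (T * d + d) := by simp
      _ ≤ _ := Finset.sum_le_sum fun x hx => hf (by have := Finset.mem_range.1 hx; omega)

lemma exists_rank {m : ℕ} (c : Fin m → ℝ) :
    ∃ σ : Equiv.Perm (Fin m), Antitone (c ∘ σ) := by
  refine ⟨Tuple.sort fun j => - c j, fun a a' h => ?_⟩
  have := Tuple.monotone_sort (fun j => - c j) h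
  simpa using this

/-- Cost of a bundle `A` with at most one chore from each block of `d` consecutive chores in the
order `σ 0, σ 1, …` of decreasing cost. It is applied with `x` the maximin share for `d + 1`
bundles, of which only the bounds `hx` and `htot` matter. -/
lemma bundle_bound {m d : ℕ} (hd : 0 < d) (c : Fin m → ℝ) (hc : ∀ j, 0 ≤ c j)
    (σ : Equiv.Perm (Fin m)) (hσ : Antitone (c ∘ σ)) (A : Finset (Fin m))
    (hA : ∀ a ∈ A, ∀ a' ∈ A, (σ.symm a : ℕ) / d = (σ.symm a' : ℕ) / d → a = a')
    (x : ℝ) (hx0 : 0 ≤ x) (hx : ∀ j, c j ≤ x) (htot : ∑ j, c j ≤ (d + 1) * x) :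
    ∑ j ∈ A, c j ≤ 2 * x := by
  -- Costs in sorted order, continued by zero.
  let f : ℕ → ℝ := fun r => if h : r < m then c (σ ⟨r, h⟩) else 0
  have hf0 : ∀ r, 0 ≤ f r := by
    intro r
    simp only [f]
    split_ifs
    · exact hc _
    · exact le_rfl
  have hf : Antitone f := by
    intro r s hrs
    by_cases hs : s < m
    · have hr : r < m := lt_of_le_of_lt hrs hs
      simp only [f, hs, hr, dif_pos]
      exact hσ (a := ⟨r, hr⟩) (b := ⟨s, hs⟩) hrs
    · have : f s = 0 := by simp [f, hs]
      rw [this]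
      exact hf0 r
  have hfx : f 0 ≤ x := by
    simp only [f]
    split_ifs
    · exact hx _
    · exact hx0
  have hfc : ∀ j, c j = f (σ.symm j) := by
    intro j
    simp [f]
  have hfsum : ∑ j, c j = ∑ r ∈ Finset.range m, f r := by
    rw [← Equiv.sum_comp σ, Finset.sum_range]
    exact Finset.sum_congr rfl fun r _ => by simp [f]
  have hbig : ∀ N, ∑ r ∈ Finset.range N, f r ≤ ∑ j, c j := by
    intro N
    rw [hfsum]
    rcases le_total N m with h | h
    · exact Finset.sum_le_sum_of_subset_of_nonneg (Finset.range_mono h) fun r _ _ => hf0 r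
    · refine le_of_eq (Finset.sum_subset (Finset.range_mono h) fun r _ hr => ?_).symm
      simp only [Finset.mem_range] at hr
      simp [f, hr]
  have h1 : ∑ j ∈ A, c j ≤ ∑ t ∈ Finset.range (m + 1), f (t * d) := by
    calc ∑ j ∈ A, c j ≤ ∑ j ∈ A, f ((σ.symm j : ℕ) / d * d) :=
          Finset.sum_le_sum fun j _ => by
            rw [hfc j]
            exact hf (Nat.div_mul_le_self _ _)
      _ = ∑ t ∈ A.image fun j => (σ.symm j : ℕ) / d, f (t * d) :=
          (Finset.sum_image (f := fun t => f (t * d)) fun a ha a' ha' h =>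
            hA a ha a' ha' h).symm
      _ ≤ _ := by
          refine Finset.sum_le_sum_of_subset_of_nonneg ?_ fun t _ _ => hf0 _
          intro t ht
          obtain ⟨j, _, rfl⟩ := Finset.mem_image.1 ht
          have := Nat.div_le_self (σ.symm j : ℕ) d
          have := (σ.symm j).isLt
          simp only [Finset.mem_range]
          omega
  have h2 := block_sum_le f hf d m
  have h3 := hbig (m * d + 1)
  rw [Finset.sum_range_succ'] at h1 h3
  rw [zero_mul] at h1
  have hd1 : (1 : ℝ) ≤ d := by exact_mod_cast hd
  set B := ∑ t ∈ Finset.range m, f ((t + 1) * d)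
  have h4 : d * (B + f 0) ≤ d * (2 * x) := by nlinarith
  exact h1.trans (le_of_mul_le_mul_left h4 (by linarith))

/-- A block of `d` consecutive ranks contains at most `d` chores. -/
lemma card_block_le {m d : ℕ} (hd : 0 < d) (σ : Equiv.Perm (Fin m)) (t : ℕ) :
    (Finset.univ.filter fun j => (σ.symm j : ℕ) / d = t).card ≤ d := by
  calc (Finset.univ.filter fun j => (σ.symm j : ℕ) / d = t).card
      ≤ (Finset.Ico (t * d) (t * d + d)).card := by
        refine Finset.card_le_card_of_injOn (fun j => (σ.symm j : ℕ)) ?_ ?_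
        · intro j hj
          have hj' : (σ.symm j : ℕ) / d = t := by simpa using hj
          rw [Nat.div_eq_iff hd] at hj'
          simp only [Finset.coe_Ico, Set.mem_Ico]
          omega
        · intro a _ a' _ h
          exact σ.symm.injective (Fin.ext h)
    _ = d := by simp

/-! ### The distribution over assignments -/

/-- best-of-both-worlds for chores. For additive cost functions and
arbitrary responsibilities there is a finitely supported distribution over assignments
of all chores such that (i) ex-ante every agent's expected cost is at most her
proportional share b_i·c_i(M), and (ii) ex-post every assignment in the support gives
every agent cost at most 2·MMS(c_i, b̌_i), where b̌ = 1/⌈1/b⌉. -/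
theorem BoBW_chores (n m : ℕ) (hn : 2 ≤ n) (c : Fin n → Fin m → ℝ)
    (hc : ∀ i j, 0 ≤ c i j)
    (b : Fin n → ℝ) (hb : ∀ i, 0 < b i ∧ b i < 1) (hsum : ∑ i, b i = 1) :
    ∃ p : (Fin n → Finset (Fin m)) → ℝ,
      (∀ A, 0 ≤ p A) ∧ (∑ A : Fin n → Finset (Fin m), p A = 1) ∧
      (∀ A, p A ≠ 0 → IsPartition A) ∧
      (∀ i, (∑ A : Fin n → Finset (Fin m), p A * bundleVal (c i) (A i)) ≤
        b i * bundleVal (c i) Finset.univ) ∧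
      (∀ A, p A ≠ 0 → ∀ i, bundleVal (c i) (A i) ≤ 2 * MMSc (c i) ⌈1 / b i⌉₊) := by
  have hk : ∀ i, 2 ≤ ⌈1 / b i⌉₊ := by
    intro i
    have h1 : (1 : ℝ) < 1 / b i := by
      rw [lt_div_iff₀ (hb i).1]
      linarith [(hb i).2]
    exact Nat.lt_ceil.2 (by exact_mod_cast h1)
  obtain ⟨d, hdk⟩ : ∃ d : Fin n → ℕ, ∀ i, ⌈1 / b i⌉₊ = d i + 1 :=
    ⟨fun i => ⌈1 / b i⌉₊ - 1, fun i => (Nat.sub_add_cancel (one_le_two.trans (hk i))).symm⟩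
  have hd : ∀ i, 0 < d i := fun i => by have := hk i; have := hdk i; omega
  have hdb : ∀ i, d i * b i ≤ 1 := by
    intro i
    have h1 : d i < ⌈1 / b i⌉₊ := by have := hdk i; omega
    rw [← le_div_iff₀ (hb i).1]
    exact (Nat.lt_ceil.1 h1).le
  choose σ hσ using fun i => exists_rank (c i)
  have : Nonempty (Fin n × Fin (m + 1)) := ⟨(⟨0, by omega⟩, 0)⟩
  have hlt : ∀ i (j : Fin m), ((σ i).symm j : ℕ) / d i < m + 1 := by
    intro i j
    have := Nat.div_le_self ((σ i).symm j : ℕ) (d i)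
    have := ((σ i).symm j).isLt
    omega
  let Y : Fin m → Fin n × Fin (m + 1) → ℝ := fun j s =>
    if ((σ s.1).symm j : ℕ) / d s.1 = (s.2 : ℕ) then b s.1 else 0
  have hrow' : ∀ j i, ∑ t, Y j (i, t) = b i := by
    intro j i
    rw [Finset.sum_eq_single (⟨_, hlt i j⟩ : Fin (m + 1))]
    · simp [Y]
    · intro t _ ht
      have : ((σ i).symm j : ℕ) / d i ≠ (t : ℕ) := fun h => ht (Fin.ext h.symm)
      simp [Y, this]
    · simp
  obtain ⟨w, g, hw0, hw1, hws, hwY⟩ := exists_matching_distribution Y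
    (fun j s => by
      simp only [Y]
      split_ifs
      · exact (hb _).1.le
      · exact le_rfl)
    (fun j => by
      rw [Fintype.sum_prod_type]
      simp only [hrow', hsum])
    (fun s => by
      simp only [Y]
      rw [← Finset.sum_filter, Finset.sum_const, nsmul_eq_mul]
      refine le_trans ?_ (hdb s.1)
      refine mul_le_mul_of_nonneg_right ?_ (hb _).1.le
      exact_mod_cast card_block_le (hd s.1) (σ s.1) s.2)
  let F : Equiv.Perm (Fin m ⊕ Fin n × Fin (m + 1)) → Fin n → Finset (Fin m) :=
    fun τ i => Finset.univ.filter fun j => (g τ j).1 = i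
  let p : (Fin n → Finset (Fin m)) → ℝ := fun A => ∑ τ, if F τ = A then w τ else 0
  have hp : ∀ A, p A ≠ 0 → ∃ τ, w τ ≠ 0 ∧ F τ = A := by
    intro A hA
    obtain ⟨τ, _, hτ⟩ := Finset.exists_ne_zero_of_sum_ne_zero hA
    by_cases h : F τ = A
    · exact ⟨τ, by simpa [h] using hτ, h⟩
    · simp [h] at hτ
  -- Expectations under `p` are expectations over the sample space of matchings.
  have hE : ∀ v : (Fin n → Finset (Fin m)) → ℝ, ∑ A, p A * v A = ∑ τ, w τ * v (F τ) := by
    intro v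
    simp only [p, Finset.sum_mul]
    rw [Finset.sum_comm]
    refine Finset.sum_congr rfl fun τ _ => ?_
    simp [ite_mul]
  refine ⟨p, ?_, ?_, ?_, ?_, ?_⟩
  · intro A
    refine Finset.sum_nonneg fun τ _ => ?_
    split_ifs
    · exact hw0 τ
    · exact le_rfl
  · simpa [hw1] using hE fun _ => 1
  · intro A hA
    obtain ⟨τ, _, rfl⟩ := hp A hA
    refine ⟨?_, fun e => ⟨(g τ e).1, by simp [F]⟩⟩
    intro i i' hii
    rw [Finset.disjoint_left]
    intro e he he'
    simp only [F, Finset.mem_filter, Finset.mem_univ, true_and] at he he'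
    exact hii (he.symm.trans he')
  · intro i
    rw [hE fun A => bundleVal (c i) (A i)]
    refine le_of_eq ?_
    have h1 : ∀ τ j, (if (g τ j).1 = i then (1 : ℝ) else 0) =
        ∑ t, if g τ j = (i, t) then 1 else 0 := by
      intro τ j
      by_cases h : (g τ j).1 = i
      · simp [Prod.ext_iff, h]
      · simp [Prod.ext_iff, h]
    have h2 : ∀ j, ∑ τ, w τ * (if (g τ j).1 = i then 1 else 0) = b i := by
      intro j
      simp only [h1, Finset.mul_sum]
      rw [Finset.sum_comm, ← hrow' j i]
      refine Finset.sum_congr rfl fun t _ => ?_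
      exact hwY j (i, t)
    calc ∑ τ, w τ * bundleVal (c i) (F τ i)
        = ∑ τ, ∑ j, (w τ * (if (g τ j).1 = i then 1 else 0)) * c i j := by
          refine Finset.sum_congr rfl fun τ _ => ?_
          simp only [bundleVal, F, Finset.sum_filter, Finset.mul_sum]
          refine Finset.sum_congr rfl fun j _ => ?_
          split_ifs <;> ring
      _ = ∑ j, b i * c i j := by
          rw [Finset.sum_comm]
          refine Finset.sum_congr rfl fun j _ => ?_
          rw [← Finset.sum_mul, h2]
      _ = b i * bundleVal (c i) Finset.univ := by rw [bundleVal, Finset.mul_sum]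
  · intro A hA i
    obtain ⟨τ, hτ, rfl⟩ := hp A hA
    obtain ⟨hinj, hY⟩ := hws τ hτ
    have hk0 : 0 < ⌈1 / b i⌉₊ := by have := hk i; omega
    have hblock : ∀ a, (g τ a).1 = i →
        ((σ i).symm a : ℕ) / d i = ((g τ a).2 : ℕ) := by
      rintro a rfl
      by_contra h
      exact hY a (by simp [Y, h])
    refine bundle_bound (hd i) (c i) (hc i) (σ i) (hσ i) (F τ i) ?_ _
      (MMSc_nonneg hk0 _ (hc i)) (cost_le_MMSc hk0 _ (hc i)) ?_
    · intro a ha a' ha' h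
      simp only [F, Finset.mem_filter, Finset.mem_univ, true_and] at ha ha'
      rw [hblock a ha, hblock a' ha'] at h
      exact hinj (Prod.ext (ha.trans ha'.symm) (Fin.ext h))
    · have := total_le_mul_MMSc hk0 (c i)
      have hcast : ((⌈1 / b i⌉₊ : ℕ) : ℝ) = d i + 1 := by
        rw [hdk i]
        push_cast
        rfl
      rwa [hcast] at this
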